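/- Fix integers r ≥ 1 and n ≥ r + 1, and set L := ⌊(n−1)/r⌋. Let S be the set of automorphisms σ of the finite binary rooted tree T_n such that: (i) σ fixes every word of length at most n−1 (equivalently, Par(σ, y) = 0 for every word y of length at most n−2); and (ii) for every i ∈ {1, …, L} and every word x of length n−1−ri, the integer Σ_{w ∈ W(r,i)} Par(σ, xbw) − Σ_{w ∈ W(r,i)} Par(σ, xaw) is even. Then the cardinality of S equals 2 raised to the power 2^{n−1} − Σ_{i=1}^{L} 2^{n−1−ir}. -/

import Mathlib

/-- Nodes of the binary rooted tree `T_n` of height `n`: words over `{a,b}`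
(encoded `a = false`, `b = true`) of length at most `n`. -/
def NodeN (n : ℕ) : Type := {w : List Bool // w.length ≤ n}

/-- An automorphism of the finite binary rooted tree `T_n`: a length-preserving bijection
of the words of length `≤ n` sending the children of `w` onto the children of `σ w`
for every word `w` of length `< n`. -/
def IsAutN (n : ℕ) (σ : NodeN n → NodeN n) : Prop :=
  Function.Bijective σ ∧ (∀ w : NodeN n, (σ w).1.length = w.1.length) ∧
    ∀ (w : List Bool) (hw : w.length < n) (s : Bool),
      ∃ t : Bool, (σ ⟨w ++ [s], by simpa using hw⟩).1 = (σ ⟨w, hw.le⟩).1 ++ [t]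

/-- The parity `Par(σ,x) ∈ {0,1}` of an automorphism of `T_n` at a word `x` of length
`< n`: `0` if `σ(xa) = σ(x)a`, and `1` otherwise (junk value `0` if `x.length ≥ n`). -/
def parN (n : ℕ) (σ : NodeN n → NodeN n) (x : List Bool) : ℕ :=
  if h : x.length < n then
    (if (σ ⟨x ++ [false], by simpa using h⟩).1 = (σ ⟨x, h.le⟩).1 ++ [false] then 0 else 1)
  else 0

/-- `W(r,i)`: the words `s₁ ⋯ s_{ri−1}` of length `r*i − 1` over `{a,b}` with
`s_j = a` whenever `r ∣ j`. -/
noncomputable def Wset (r i : ℕ) : Finset (List Bool) :=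
  ((Finset.univ : Finset (Fin (r*i-1) → Bool)).filter
    (fun s => ∀ j : Fin (r*i-1), r ∣ (j:ℕ)+1 → s j = false)).image List.ofFn

/-!
Let `m = n - 1`. An automorphism of `T_{m+1}` is determined by its parities, which can be
prescribed arbitrarily. Those fixing all words of length at most `m` thus correspond to the
functions `f` from the `2 ^ m` words of length `m` to `𝔽₂`, and the evenness conditions become
linear equations on `f`, one for each pair `(i, x)` with `1 ≤ i ≤ m / r` and `x` a word of length
`m - r * i`.

These equations are independent. Let the pivot of `(i, x)` be the word `x b a ⋯ a` of length `m`.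
It occurs in the equation `(i, x)`, and in no other `(i, x')`. If it occurs in `(i', x')` with
`i' > i`, then the displayed letter `b` stands at position `r * (i' - i)` of the corresponding word
of `W(r, i')`, where only `a` is allowed. Hence the equations restricted to the pivots form a
unitriangular system, and the solution space has dimension `2 ^ m` minus the number of equations.
-/

section UnitriangularSystems

variable {R V J α : Type*} [LinearOrder α]

theorem det_eq_one_of_unitriangular [CommRing R] [Fintype J] [DecidableEq J] {M : Matrix J J R}
    {b : J → α} (hdiag : ∀ j, M j j = 1) (hoff : ∀ i j, i ≠ j → b j ≤ b i → M i j = 0) :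
    M.det = 1 := by
  have htri : M.BlockTriangular b := fun i j hji => hoff i j (by rintro rfl; exact hji.false) hji.le
  have hblock (a : α) : M.toSquareBlock b a = 1 := by
    ext i j
    obtain rfl | hij := eq_or_ne i j
    · simp [Matrix.toSquareBlock_def, hdiag]
    · simpa [Matrix.toSquareBlock_def, hij] using
        hoff i j (Subtype.coe_injective.ne hij) (j.2.trans i.2.symm).le
  rw [htri.det]
  exact Finset.prod_eq_one fun a _ => by rw [hblock, Matrix.det_one]

theorem surjective_of_unitriangular [CommRing R] [AddCommGroup V] [Module R V] [Finite J]
    (Φ : V →ₗ[R] J → R) (v : J → V) (b : J → α) (hdiag : ∀ j, Φ (v j) j = 1)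
    (hoff : ∀ i j, i ≠ j → b j ≤ b i → Φ (v j) i = 0) : Function.Surjective Φ := by
  classical
  have := Fintype.ofFinite J
  let M : Matrix J J R := Matrix.of fun i j => Φ (v j) i
  have hdet : IsUnit M.det := by
    rw [det_eq_one_of_unitriangular (M := M) hdiag hoff]
    exact isUnit_one
  intro g
  refine ⟨∑ j, (M⁻¹.mulVec g) j • v j, ?_⟩
  calc Φ (∑ j, (M⁻¹.mulVec g) j • v j) = M.mulVec (M⁻¹.mulVec g) := by
        ext i
        simp [M, Matrix.mulVec, dotProduct, mul_comm]
    _ = g := by rw [Matrix.mulVec_mulVec, Matrix.mul_nonsing_inv M hdet, Matrix.one_mulVec]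

end UnitriangularSystems

theorem natCard_ker_of_surjective {K V W : Type*} [DivisionRing K] [AddCommGroup V] [Module K V]
    [Module.Finite K V] [AddCommGroup W] [Module K W] (Φ : V →ₗ[K] W)
    (hΦ : Function.Surjective Φ) :
    Nat.card (LinearMap.ker Φ) = Nat.card K ^ (Module.finrank K V - Module.finrank K W) := by
  have hrank := Φ.finrank_range_add_finrank_ker
  rw [LinearMap.range_eq_top.2 hΦ, finrank_top] at hrank
  rw [Module.natCard_eq_pow_finrank (K := K), ← hrank, Nat.add_sub_cancel_left]

section Labels

/-- The words of length `m`, the nodes of level `m`. -/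
abbrev WordsOfLength (m : ℕ) : Type :=
  {w : List Bool // w.length = m}

instance (m : ℕ) : Fintype (WordsOfLength m) :=
  inferInstanceAs (Fintype (List.Vector Bool m))

theorem card_wordsOfLength (m : ℕ) : Fintype.card (WordsOfLength m) = 2 ^ m :=
  card_vector (α := Bool) m

variable {R : Type*} [Zero R] {m : ℕ}

/-- A labelling `f` of the words of length `m`, extended by zero to all words, so that it can be
evaluated at concatenations without carrying a proof that their length is `m`. -/
noncomputable def extendLabel (f : WordsOfLength m → R) : List Bool → R :=
  Function.extend Subtype.val f 0

theorem extendLabel_of_length_eq (f : WordsOfLength m → R) {w : List Bool} (hw : w.length = m) :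
    extendLabel f w = f ⟨w, hw⟩ :=
  Subtype.val_injective.extend_apply f 0 ⟨w, hw⟩

theorem extendLabel_of_length_ne (f : WordsOfLength m → R) {w : List Bool} (hw : w.length ≠ m) :
    extendLabel f w = 0 :=
  Function.extend_apply' f (0 : List Bool → R) w fun ⟨y, hy⟩ => hw (hy ▸ y.2)

theorem extendLabel_single (y : WordsOfLength m) (c : R) (w : List Bool) :
    extendLabel (Pi.single y c : WordsOfLength m → R) w = if w = y.1 then c else 0 := by
  by_cases hw : w.length = m
  · simp [extendLabel_of_length_eq _ hw, Pi.single_apply, Subtype.ext_iff]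
  · have hne : w ≠ y.1 := fun h => hw (h ▸ y.2)
    rw [extendLabel_of_length_ne _ hw, if_neg hne]

end Labels

theorem exists_eq_append_cons_of_append_eq {α : Type*} {x y v w : List α} {s : α}
    (hlen : y.length < x.length) (h : y ++ s :: w = x ++ v) :
    ∃ u, x = y ++ s :: u ∧ w = u ++ v := by
  obtain ⟨u, rfl, hu⟩ | ⟨u, rfl, -⟩ := List.append_eq_append_iff.1 h
  · cases u with
    | nil => simp at hlen
    | cons t u =>
      obtain ⟨rfl, rfl⟩ := List.cons.inj hu
      exact ⟨u, rfl, rfl⟩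
  · simp at hlen

section AllowedWords

variable {r i : ℕ} {w : List Bool}

theorem mem_Wset : w ∈ Wset r i ↔
    w.length = r * i - 1 ∧ ∀ (j : ℕ) (hj : j < w.length), r ∣ j + 1 → w[j] = false := by
  simp only [Wset, Finset.mem_image, Finset.mem_filter, Finset.mem_univ, true_and]
  constructor
  · rintro ⟨s, hs, rfl⟩
    exact ⟨List.length_ofFn, fun j hj hdvd => by simpa using hs ⟨j, by simpa using hj⟩ hdvd⟩
  · rintro ⟨hlen, hw⟩
    exact ⟨fun j => w[j], fun j => hw j (j.2.trans_eq hlen.symm),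
      List.ext_getElem (by simp [hlen]) (by simp)⟩

theorem length_of_mem_Wset (hw : w ∈ Wset r i) : w.length = r * i - 1 :=
  (mem_Wset.1 hw).1

theorem replicate_false_mem_Wset (r i : ℕ) : List.replicate (r * i - 1) false ∈ Wset r i :=
  mem_Wset.2 ⟨List.length_replicate, by simp⟩

theorem append_true_notMem_Wset {u v : List Bool} (hu : r ∣ u.length + 1) :
    u ++ true :: v ∉ Wset r i := fun h => by
  simpa using (mem_Wset.1 h).2 u.length (by simp) hu

end AllowedWords

section Equations

variable {r m : ℕ}

/-- The pairs `(i, x)` indexing the evenness conditions, for automorphisms of `T_{m+1}`. -/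
abbrev EqIndex (r m : ℕ) : Type :=
  Σ i : Finset.Icc 1 (m / r), WordsOfLength (m - r * i)

theorem card_eqIndex (r m : ℕ) :
    Fintype.card (EqIndex r m) = ∑ i ∈ Finset.Icc 1 (m / r), 2 ^ (m - i * r) := by
  simp only [Fintype.card_sigma, card_wordsOfLength, mul_comm r]
  exact Finset.sum_coe_sort _ fun i => 2 ^ (m - i * r)

theorem EqIndex.one_le_mul (hr : 1 ≤ r) (j : EqIndex r m) : 1 ≤ r * j.1 :=
  Nat.mul_pos hr (Finset.mem_Icc.1 j.1.2).1

theorem EqIndex.mul_le (j : EqIndex r m) : r * j.1 ≤ m :=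
  (Nat.mul_le_mul_left r (Finset.mem_Icc.1 j.1.2).2).trans (Nat.mul_div_le m r)

theorem EqIndex.length_append (hr : 1 ≤ r) (j : EqIndex r m) (s : Bool) {w : List Bool}
    (hw : w.length = r * j.1 - 1) : (j.2.1 ++ [s] ++ w).length = m := by
  have hlow := j.one_le_mul hr
  have hupp := j.mul_le
  simp only [List.length_append, List.length_singleton, j.2.2, hw]
  omega

/-- The left-hand sides of the evenness conditions, as linear forms in the labels of the words of
length `m`. -/
noncomputable def evennessMap (r m : ℕ) :
    (WordsOfLength m → ZMod 2) →ₗ[ZMod 2] EqIndex r m → ZMod 2 :=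
  let eval (w : List Bool) : (List Bool → ZMod 2) →ₗ[ZMod 2] ZMod 2 := LinearMap.proj w
  LinearMap.pi fun j =>
    (∑ w ∈ Wset r j.1, eval (j.2.1 ++ [true] ++ w) -
      ∑ w ∈ Wset r j.1, eval (j.2.1 ++ [false] ++ w)) ∘ₗ
        Function.ExtendByZero.linearMap (ZMod 2) Subtype.val

theorem evennessMap_apply (f : WordsOfLength m → ZMod 2) (j : EqIndex r m) :
    evennessMap r m f j = ∑ w ∈ Wset r j.1, extendLabel f (j.2.1 ++ [true] ++ w) -
      ∑ w ∈ Wset r j.1, extendLabel f (j.2.1 ++ [false] ++ w) := by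
  simp [evennessMap, extendLabel]

/-- The word `x b a ⋯ a` of length `m`, the pivot of the equation `(i, x)`. -/
def EqIndex.pivot (hr : 1 ≤ r) (j : EqIndex r m) : WordsOfLength m :=
  ⟨j.2.1 ++ [true] ++ List.replicate (r * j.1 - 1) false,
    j.length_append hr true List.length_replicate⟩

theorem EqIndex.append_ne_pivot (hr : 1 ≤ r) {j j' : EqIndex r m} (hne : j' ≠ j)
    (hle : (j.1 : ℕ) ≤ j'.1) (s : Bool) {w : List Bool} (hw : w ∈ Wset r j'.1) :
    j'.2.1 ++ [s] ++ w ≠ (j.pivot hr).1 := by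
  obtain ⟨i, x, hx⟩ := j
  obtain ⟨i', x', hx'⟩ := j'
  have hupp : r * i' ≤ m := EqIndex.mul_le ⟨i', x', hx'⟩
  simp only [EqIndex.pivot, List.append_assoc, List.singleton_append] at hle hw ⊢
  intro heq
  obtain hlt | hi := hle.lt_or_eq
  · obtain ⟨d, hd⟩ := Nat.exists_eq_add_of_lt hlt
    have hmul : r * i' = r * i + r * (d + 1) := by rw [hd]; ring
    have hpos : 0 < r * (d + 1) := Nat.mul_pos hr d.succ_pos
    obtain ⟨u, rfl, rfl⟩ := exists_eq_append_cons_of_append_eq (by omega) heq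
    have hlen : u.length + 1 = r * (d + 1) := by
      simp only [List.length_append, List.length_cons] at hx
      omega
    exact append_true_notMem_Wset (hlen ▸ dvd_mul_right r (d + 1)) hw
  · obtain rfl : i = i' := Subtype.ext hi
    obtain ⟨rfl, -⟩ := List.append_inj heq (hx'.trans hx.symm)
    exact hne rfl

theorem evennessMap_surjective (hr : 1 ≤ r) : Function.Surjective (evennessMap r m) := by
  refine surjective_of_unitriangular (evennessMap r m)
    (fun j => Pi.single (j.pivot hr) 1) (fun j => (j.1 : ℕ)) (fun j => ?_) fun j' j hne hle => ?_
  · have hb : ∑ w ∈ Wset r j.1,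
        extendLabel (Pi.single (j.pivot hr) (1 : ZMod 2)) (j.2.1 ++ [true] ++ w) = 1 := by
      simp [extendLabel_single, EqIndex.pivot, replicate_false_mem_Wset]
    have ha : ∑ w ∈ Wset r j.1,
        extendLabel (Pi.single (j.pivot hr) (1 : ZMod 2)) (j.2.1 ++ [false] ++ w) = 0 := by
      simp [extendLabel_single, EqIndex.pivot]
    rw [evennessMap_apply, hb, ha, sub_zero]
  · have hzero (s : Bool) : ∑ w ∈ Wset r j'.1,
        extendLabel (Pi.single (j.pivot hr) (1 : ZMod 2)) (j'.2.1 ++ [s] ++ w) = 0 :=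
      Finset.sum_eq_zero fun w hw => by
        rw [extendLabel_single, if_neg (EqIndex.append_ne_pivot hr hne hle s hw)]
    rw [evennessMap_apply, hzero, hzero, sub_zero]

theorem natCard_ker_evennessMap (hr : 1 ≤ r) : Nat.card (LinearMap.ker (evennessMap r m)) =
    2 ^ (2 ^ m - ∑ i ∈ Finset.Icc 1 (m / r), 2 ^ (m - i * r)) := by
  rw [natCard_ker_of_surjective _ (evennessMap_surjective hr), Module.finrank_fintype_fun_eq_card,
    Module.finrank_fintype_fun_eq_card, card_wordsOfLength, card_eqIndex,
    Nat.card_zmod]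

end Equations

section Portraits

/-- The action on words of the tree automorphism with portrait `p`: it changes the letter that
follows a prefix `x` exactly if `p x` holds. -/
def portraitAct : (List Bool → Bool) → List Bool → List Bool
  | _, [] => []
  | p, s :: w => (s ^^ p []) :: portraitAct (fun x => p (s :: x)) w

theorem length_portraitAct (p : List Bool → Bool) (w : List Bool) :
    (portraitAct p w).length = w.length := by
  induction w generalizing p with
  | nil => rfl
  | cons s w ih => simp [portraitAct, ih]

theorem portraitAct_append_singleton (p : List Bool → Bool) (x : List Bool) (s : Bool) :
    portraitAct p (x ++ [s]) = portraitAct p x ++ [s ^^ p x] := by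
  induction x generalizing p with
  | nil => rfl
  | cons t x ih => simp [portraitAct, ih]

theorem portraitAct_injective (p : List Bool → Bool) : Function.Injective (portraitAct p) := by
  intro u v h
  induction u generalizing p v with
  | nil => cases v <;> simp_all [portraitAct]
  | cons s u ih =>
    cases v with
    | nil => simp [portraitAct] at h
    | cons t v =>
      simp only [portraitAct, List.cons.injEq, Bool.xor_left_inj] at h
      obtain ⟨rfl, h⟩ := h
      rw [ih _ h]

theorem portraitAct_eq_self {p : List Bool → Bool} {w : List Bool}
    (hp : ∀ x : List Bool, x.length < w.length → p x = false) : portraitAct p w = w := by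
  induction w using List.reverseRecOn with
  | nil => rfl
  | append_singleton x s ih =>
    rw [portraitAct_append_singleton, ih fun y hy => hp y (hy.trans_le (by simp)), hp x (by simp),
      Bool.xor_false]

variable {n : ℕ}

instance : Finite (NodeN n) :=
  (List.finite_length_le Bool n).to_subtype

/-- The automorphism of `T_n` with portrait `p`. -/
def portraitAut (n : ℕ) (p : List Bool → Bool) (w : NodeN n) : NodeN n :=
  ⟨portraitAct p w.1, (length_portraitAct p w.1).trans_le w.2⟩

theorem isAutN_portraitAut (n : ℕ) (p : List Bool → Bool) : IsAutN n (portraitAut n p) := by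
  have hinj : Function.Injective (portraitAut n p) := fun u v h =>
    Subtype.ext (portraitAct_injective p (congrArg Subtype.val h))
  exact ⟨Finite.injective_iff_bijective.1 hinj, fun w => length_portraitAct p w.1,
    fun w _ s => ⟨_, portraitAct_append_singleton p w s⟩⟩

theorem parN_portraitAut (p : List Bool → Bool) {x : List Bool} (hx : x.length < n) :
    parN n (portraitAut n p) x = (p x).toNat := by
  simp only [parN, dif_pos hx, portraitAut, portraitAct_append_singleton]
  cases p x <;> simp

theorem IsAutN.apply_append_singleton {σ : NodeN n → NodeN n} (hσ : IsAutN n σ) (x : List Bool)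
    (s : Bool) (hx : x.length < n) :
    (σ ⟨x ++ [s], by simpa using hx⟩).1 = (σ ⟨x, hx.le⟩).1 ++ [s ^^ decide (parN n σ x = 1)] := by
  obtain ⟨ta, ha⟩ := hσ.2.2 x hx false
  obtain ⟨tb, hb⟩ := hσ.2.2 x hx true
  have hne : ta ≠ tb := by
    rintro rfl
    simpa using congrArg Subtype.val (hσ.1.1 (Subtype.ext (ha.trans hb.symm)))
  have hpar : parN n σ x = ta.toNat := by
    rw [parN, dif_pos hx, ha]
    cases ta <;> simp
  rw [hpar]
  cases s <;> cases ta <;> cases tb <;> simp_all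

theorem IsAutN.ext_parN {σ τ : NodeN n → NodeN n} (hσ : IsAutN n σ) (hτ : IsAutN n τ)
    (h : ∀ x : List Bool, x.length < n → parN n σ x = parN n τ x) : σ = τ := by
  suffices heq : ∀ (w : List Bool) (hw : w.length ≤ n), (σ ⟨w, hw⟩).1 = (τ ⟨w, hw⟩).1 from
    funext fun w => Subtype.ext (heq w.1 w.2)
  intro w
  induction w using List.reverseRecOn with
  | nil =>
    intro hw
    rw [List.eq_nil_of_length_eq_zero (hσ.2.1 ⟨[], hw⟩),
      List.eq_nil_of_length_eq_zero (hτ.2.1 ⟨[], hw⟩)]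
  | append_singleton x s ih =>
    intro hw
    have hx : x.length < n := by simpa using hw
    rw [hσ.apply_append_singleton x s hx, hτ.apply_append_singleton x s hx, ih hx.le, h x hx]

end Portraits

section LastLevel

variable {m : ℕ}

theorem parN_eq_zero_of_fixes {n : ℕ} {σ : NodeN n → NodeN n}
    (hσ : ∀ w : NodeN n, w.1.length ≤ m → σ w = w) {x : List Bool} (hx : x.length < m) :
    parN n σ x = 0 := by
  by_cases hxn : x.length < n
  · have hfix := hσ ⟨x, hxn.le⟩ hx.le
    have hfix_a := hσ ⟨x ++ [false], by simpa using hxn⟩ (by simpa using hx)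
    simp [parN, hxn, hfix, hfix_a]
  · rw [parN, dif_neg hxn]

/-- The parities of `σ`, an automorphism of `T_{m+1}`, at the words of length `m`, in `𝔽₂`. -/
def lastParity (m : ℕ) (σ : NodeN (m + 1) → NodeN (m + 1)) (y : WordsOfLength m) : ZMod 2 :=
  parN (m + 1) σ y.1

theorem extendLabel_lastParity (σ : NodeN (m + 1) → NodeN (m + 1)) {w : List Bool}
    (hw : w.length = m) : extendLabel (lastParity m σ) w = parN (m + 1) σ w :=
  extendLabel_of_length_eq _ hw

theorem parN_eq_val {n : ℕ} (σ : NodeN n → NodeN n) (x : List Bool) :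
    parN n σ x = ((parN n σ x : ZMod 2)).val := by
  rw [parN]
  split_ifs <;> rfl

theorem lastParity_bijOn (m : ℕ) : Set.BijOn (lastParity m)
    {σ | IsAutN (m + 1) σ ∧ ∀ w : NodeN (m + 1), w.1.length ≤ m → σ w = w} Set.univ := by
  refine ⟨Set.mapsTo_univ _ _, ?_, ?_⟩
  · rintro σ ⟨hσ, hσfix⟩ τ ⟨hτ, hτfix⟩ h
    refine hσ.ext_parN hτ fun x hx => ?_
    obtain hlt | heq := (Nat.le_of_lt_succ hx).lt_or_eq
    · rw [parN_eq_zero_of_fixes hσfix hlt, parN_eq_zero_of_fixes hτfix hlt]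
    · rw [parN_eq_val σ, parN_eq_val τ]
      exact congrArg ZMod.val (congrFun h ⟨x, heq⟩)
  · intro f _
    let p (x : List Bool) : Bool := decide (extendLabel f x = 1)
    have hcast : ∀ c : ZMod 2, ((decide (c = 1)).toNat : ZMod 2) = c := by decide
    refine ⟨portraitAut (m + 1) p, ⟨isAutN_portraitAut _ p, fun w hw => Subtype.ext ?_⟩, ?_⟩
    · exact portraitAct_eq_self fun x hx => by
        simp [p, extendLabel_of_length_ne f (hx.trans_le hw).ne]
    · funext y
      rw [lastParity, parN_portraitAut p (y.2.trans_lt m.lt_succ_self), hcast]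
      exact extendLabel_of_length_eq f y.2

theorem even_sub_iff_evennessMap_eq_zero {r : ℕ} (hr : 1 ≤ r)
    (σ : NodeN (m + 1) → NodeN (m + 1)) (j : EqIndex r m) :
    Even ((∑ w ∈ Wset r j.1, (parN (m + 1) σ (j.2.1 ++ [true] ++ w) : ℤ)) -
      ∑ w ∈ Wset r j.1, (parN (m + 1) σ (j.2.1 ++ [false] ++ w) : ℤ)) ↔
        evennessMap r m (lastParity m σ) j = 0 := by
  have hsum (s : Bool) : ∑ w ∈ Wset r j.1, extendLabel (lastParity m σ) (j.2.1 ++ [s] ++ w) =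
      ∑ w ∈ Wset r j.1, (parN (m + 1) σ (j.2.1 ++ [s] ++ w) : ZMod 2) :=
    Finset.sum_congr rfl fun w hw =>
      extendLabel_lastParity σ (j.length_append hr s (length_of_mem_Wset hw))
  rw [evennessMap_apply, hsum, hsum, ← ZMod.intCast_eq_zero_iff_even]
  push_cast
  rfl

theorem lastParity_mem_ker_evennessMap_iff {r : ℕ} (hr : 1 ≤ r)
    (σ : NodeN (m + 1) → NodeN (m + 1)) :
    lastParity m σ ∈ LinearMap.ker (evennessMap r m) ↔
      ∀ i : ℕ, 1 ≤ i → i ≤ m / r → ∀ x : List Bool, x.length = m - r * i →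
        Even ((∑ w ∈ Wset r i, (parN (m + 1) σ (x ++ [true] ++ w) : ℤ)) -
          ∑ w ∈ Wset r i, (parN (m + 1) σ (x ++ [false] ++ w) : ℤ)) := by
  simp only [LinearMap.mem_ker, funext_iff, Pi.zero_apply,
    ← even_sub_iff_evennessMap_eq_zero hr σ]
  constructor
  · intro h i hi hiL x hx
    exact h ⟨⟨i, Finset.mem_Icc.2 ⟨hi, hiL⟩⟩, ⟨x, hx⟩⟩
  · rintro h ⟨⟨i, hi⟩, ⟨x, hx⟩⟩
    exact h i (Finset.mem_Icc.1 hi).1 (Finset.mem_Icc.1 hi).2 x hx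

end LastLevel

/-- Fix `r ≥ 1` and `n ≥ r + 1`, and set `L := ⌊(n−1)/r⌋`. Let `S` be
the set of automorphisms `σ` of `T_n` such that (i) `σ` fixes every word of length at
most `n−1`, and (ii) for every `i ∈ {1,…,L}` and every word `x` of length `n−1−ri`, the
integer `Σ_{w ∈ W(r,i)} Par(σ, xbw) − Σ_{w ∈ W(r,i)} Par(σ, xaw)` is even. Then `S` has
cardinality `2 ^ (2^{n−1} − Σ_{i=1}^{L} 2^{n−1−ir})`. -/
theorem card_S (r n : ℕ) (hr : 1 ≤ r) (hn : r + 1 ≤ n) :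
    Nat.card {σ : NodeN n → NodeN n //
      IsAutN n σ ∧
      (∀ w : NodeN n, w.1.length ≤ n - 1 → σ w = w) ∧
      (∀ i : ℕ, 1 ≤ i → i ≤ (n-1)/r → ∀ x : List Bool, x.length = n - 1 - r*i →
        Even ((∑ w ∈ Wset r i, (parN n σ (x ++ [true] ++ w) : ℤ)) -
          ∑ w ∈ Wset r i, (parN n σ (x ++ [false] ++ w) : ℤ)))} =
    2 ^ (2^(n-1) - ∑ i ∈ Finset.Icc 1 ((n-1)/r), 2^(n-1-i*r)) := by
  obtain ⟨m, rfl⟩ : ∃ m, n = m + 1 := ⟨n - 1, by omega⟩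
  have hbij := (lastParity_bijOn m).subset_right
    (Set.subset_univ (LinearMap.ker (evennessMap r m) : Set (WordsOfLength m → ZMod 2)))
  refine Eq.trans (Nat.card_congr ?_) (natCard_ker_evennessMap hr)
  refine (Equiv.subtypeEquivRight fun σ => ?_).trans hbij.equiv
  rw [Nat.add_sub_cancel, ← lastParity_mem_ker_evennessMap_iff hr, ← and_assoc]
  rfl
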